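/- For every λ > 0 and d ≥ 0, the jump of the 1D transfer function K₁ across the branch cut on the negative real axis is lim_{ε→0⁺} [ K₁(−λ − iε, d) − K₁(−λ + iε, d) ] = i·e^{iπ/4}·cosh(d·e^{iπ/4}·√λ) / √λ. -/

import Mathlib

/-!
The logarithm is continuous from above at a negative real `z` and jumps down by `2πi` on crossing
to the lower half-plane, so `√` is continuous from above and changes sign from below. As
`K₁(z, d) = F(√z)` with `F(w) = e^{iπ/4} exp(-d e^{-iπ/4} w) / (2w)`, the jump is `F(-w) - F(w)`
at `w = √(-λ) = i √λ`, whose two exponentials have opposite exponents and add up to a `cosh`.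
-/

open Complex Set Filter

/-- Principal branch of the complex square root. -/
noncomputable def csqrt (z : ℂ) : ℂ := z ^ (1/2 : ℂ)

/-- The 1D transfer function `K₁(z,d) = e^{iπ/4} exp(-d e^{-iπ/4} √z)/(2√z)`. -/
noncomputable def K1 (z : ℂ) (d : ℝ) : ℂ :=
  Complex.exp ((Real.pi : ℂ)/4 * Complex.I) *
    Complex.exp (-(d : ℂ) * Complex.exp (-((Real.pi : ℂ)/4) * Complex.I) * csqrt z) /
      (2 * csqrt z)

open scoped Topology

section BranchCut

variable {z : ℂ}

theorem continuousWithinAt_cpow_const_of_re_neg_of_im_zero (a : ℂ) (hre : z.re < 0)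
    (him : z.im = 0) : ContinuousWithinAt (fun w : ℂ => w ^ a) {w | 0 ≤ w.im} z := by
  have hz : z ≠ 0 := ne_of_apply_ne re hre.ne
  have hexp : ContinuousWithinAt (fun w => exp (log w * a)) {w | 0 ≤ w.im} z :=
    ((continuousWithinAt_log_of_re_neg_of_im_zero hre him).mul continuousWithinAt_const).cexp
  exact hexp.congr_of_eventuallyEq (nhdsWithin_le_nhds (cpow_eq_nhds hz))
    (cpow_def_of_ne_zero hz a)

theorem tendsto_cpow_const_nhdsWithin_im_neg_of_re_neg_of_im_zero (a : ℂ) (hre : z.re < 0)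
    (him : z.im = 0) :
    Tendsto (fun w : ℂ => w ^ a) (𝓝[{w | w.im < 0}] z)
      (𝓝 (exp (-(2 * Real.pi * I * a)) * z ^ a)) := by
  have hz : z ≠ 0 := ne_of_apply_ne re hre.ne
  have hlimit : exp ((Real.log ‖z‖ - Real.pi * I) * a) =
      exp (-(2 * Real.pi * I * a)) * z ^ a := by
    rw [cpow_def_of_ne_zero hz, log, arg_eq_pi_iff.mpr ⟨hre, him⟩, ← exp_add]
    ring_nf
  rw [← hlimit]
  exact ((tendsto_log_nhdsWithin_im_neg_of_re_neg_of_im_zero hre him).mul_const a).cexp.congr'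
    (nhdsWithin_le_nhds (cpow_eq_nhds hz).symm)

theorem continuousWithinAt_csqrt_of_re_neg_of_im_zero (hre : z.re < 0) (him : z.im = 0) :
    ContinuousWithinAt csqrt {w | 0 ≤ w.im} z :=
  continuousWithinAt_cpow_const_of_re_neg_of_im_zero (1 / 2) hre him

theorem tendsto_csqrt_nhdsWithin_im_neg_of_re_neg_of_im_zero (hre : z.re < 0) (him : z.im = 0) :
    Tendsto csqrt (𝓝[{w | w.im < 0}] z) (𝓝 (-csqrt z)) := by
  have hmonodromy : exp (-(2 * Real.pi * I * (1 / 2))) = -1 := by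
    rw [show 2 * (Real.pi : ℂ) * I * (1 / 2) = Real.pi * I by ring, exp_neg, exp_pi_mul_I,
      inv_neg_one]
  have h := tendsto_cpow_const_nhdsWithin_im_neg_of_re_neg_of_im_zero (1 / 2) hre him
  rwa [hmonodromy, neg_one_mul] at h

end BranchCut

theorem csqrt_ne_zero {z : ℂ} (hz : z ≠ 0) : csqrt z ≠ 0 :=
  cpow_ne_zero_iff.mpr (Or.inl hz)

theorem csqrt_eq_sqrt (z : ℂ) : csqrt z = sqrt z := by
  rw [csqrt, sqrt, one_div]

theorem csqrt_neg_ofReal {x : ℝ} (hx : 0 ≤ x) : csqrt (-(x : ℂ)) = I * (Real.sqrt x : ℂ) := by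
  rw [csqrt_eq_sqrt, sqrt_neg_of_nonneg (by simpa using hx), sqrt_of_nonneg (by simpa using hx),
    ofReal_re]

/-- The transfer function as a function of a chosen square root `w` of `z`, so that it can be
evaluated at both `√z` and `-√z`; it takes the junk value `0` at `w = 0`. -/
noncomputable def transferOfRoot (w : ℂ) (d : ℝ) : ℂ :=
  exp ((Real.pi : ℂ) / 4 * I) * exp (-(d : ℂ) * exp (-((Real.pi : ℂ) / 4) * I) * w) / (2 * w)

theorem K1_eq_transferOfRoot (z : ℂ) (d : ℝ) : K1 z d = transferOfRoot (csqrt z) d :=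
  rfl

theorem continuousAt_transferOfRoot {w : ℂ} (hw : w ≠ 0) (d : ℝ) :
    ContinuousAt (fun w => transferOfRoot w d) w :=
  ContinuousAt.div (by fun_prop) (by fun_prop) (mul_ne_zero two_ne_zero hw)

theorem transferOfRoot_neg_sub_transferOfRoot (w : ℂ) (d : ℝ) :
    transferOfRoot (-w) d - transferOfRoot w d =
      -(exp ((Real.pi : ℂ) / 4 * I) * cosh (d * exp (-((Real.pi : ℂ) / 4) * I) * w) / w) := by
  set r := exp (-((Real.pi : ℂ) / 4) * I) with hr
  have hneg : -(d : ℂ) * r * -w = d * r * w := by ring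
  have hpos : -(d : ℂ) * r * w = -(d * r * w) := by ring
  rw [transferOfRoot, transferOfRoot, ← hr, hneg, hpos, cosh]
  ring

theorem exp_neg_pi_div_four_mul_I_mul_I :
    exp (-((Real.pi : ℂ) / 4) * I) * I = exp ((Real.pi : ℂ) / 4 * I) := by
  calc exp (-((Real.pi : ℂ) / 4) * I) * I
      = exp (-((Real.pi : ℂ) / 4) * I) * exp (Real.pi / 2 * I) := by rw [exp_pi_div_two_mul_I]
    _ = exp ((Real.pi : ℂ) / 4 * I) := by rw [← exp_add]; ring_nf

theorem transferOfRoot_neg_sub_transferOfRoot_I_mul (s : ℂ) (d : ℝ) :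
    transferOfRoot (-(I * s)) d - transferOfRoot (I * s) d =
      I * exp ((Real.pi : ℂ) / 4 * I) * cosh (d * exp ((Real.pi : ℂ) / 4 * I) * s) / s := by
  rw [transferOfRoot_neg_sub_transferOfRoot, ← mul_assoc, mul_assoc (d : ℂ),
    exp_neg_pi_div_four_mul_I_mul_I, div_mul_eq_div_div, div_I]
  ring

theorem continuousWithinAt_K1_of_re_neg_of_im_zero {z : ℂ} (d : ℝ) (hre : z.re < 0)
    (him : z.im = 0) : ContinuousWithinAt (fun w => K1 w d) {w | 0 ≤ w.im} z :=
  (continuousAt_transferOfRoot (csqrt_ne_zero (ne_of_apply_ne re hre.ne)) d).comp_continuousWithinAt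
    (continuousWithinAt_csqrt_of_re_neg_of_im_zero hre him)

theorem tendsto_K1_nhdsWithin_im_neg_of_re_neg_of_im_zero {z : ℂ} (d : ℝ) (hre : z.re < 0)
    (him : z.im = 0) :
    Tendsto (fun w => K1 w d) (𝓝[{w | w.im < 0}] z) (𝓝 (transferOfRoot (-csqrt z) d)) :=
  (continuousAt_transferOfRoot
    (neg_ne_zero.mpr (csqrt_ne_zero (ne_of_apply_ne re hre.ne))) d).tendsto.comp
    (tendsto_csqrt_nhdsWithin_im_neg_of_re_neg_of_im_zero hre him)

theorem tendsto_add_ofReal_mul_I_nhdsWithin (z : ℂ) :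
    Tendsto (fun ε : ℝ => z + (ε : ℂ) * I) (𝓝[>] 0) (𝓝[{w | z.im < w.im}] z) := by
  refine tendsto_nhdsWithin_iff.mpr ⟨?_, ?_⟩
  · have hcont : Continuous fun ε : ℝ => z + (ε : ℂ) * I := by fun_prop
    simpa using (hcont.tendsto 0).mono_left nhdsWithin_le_nhds
  · filter_upwards [self_mem_nhdsWithin] with ε hε
    simpa using hε

theorem tendsto_sub_ofReal_mul_I_nhdsWithin (z : ℂ) :
    Tendsto (fun ε : ℝ => z - (ε : ℂ) * I) (𝓝[>] 0) (𝓝[{w | w.im < z.im}] z) := by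
  refine tendsto_nhdsWithin_iff.mpr ⟨?_, ?_⟩
  · have hcont : Continuous fun ε : ℝ => z - (ε : ℂ) * I := by fun_prop
    simpa using (hcont.tendsto 0).mono_left nhdsWithin_le_nhds
  · filter_upwards [self_mem_nhdsWithin] with ε hε
    simpa using hε

theorem tendsto_K1_sub_K1_of_re_neg_of_im_zero {z : ℂ} (d : ℝ) (hre : z.re < 0) (him : z.im = 0) :
    Tendsto (fun ε : ℝ => K1 (z - (ε : ℂ) * I) d - K1 (z + (ε : ℂ) * I) d) (𝓝[>] 0)
      (𝓝 (transferOfRoot (-csqrt z) d - transferOfRoot (csqrt z) d)) := by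
  have hbelow : Tendsto (fun ε : ℝ => z - (ε : ℂ) * I) (𝓝[>] 0) (𝓝[{w | w.im < 0}] z) :=
    him ▸ tendsto_sub_ofReal_mul_I_nhdsWithin z
  have habove : Tendsto (fun ε : ℝ => z + (ε : ℂ) * I) (𝓝[>] 0) (𝓝[{w | 0 ≤ w.im}] z) :=
    (tendsto_add_ofReal_mul_I_nhdsWithin z).mono_right
      (nhdsWithin_mono z fun _ hw => him.ge.trans (le_of_lt hw))
  rw [← K1_eq_transferOfRoot]
  exact ((tendsto_K1_nhdsWithin_im_neg_of_re_neg_of_im_zero d hre him).comp hbelow).sub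
    ((continuousWithinAt_K1_of_re_neg_of_im_zero d hre him).tendsto.comp habove)

theorem stmt7_general (lam d : ℝ) (hlam : 0 < lam) :
    Tendsto (fun ε : ℝ =>
        K1 (-(lam : ℂ) - (ε : ℂ) * Complex.I) d - K1 (-(lam : ℂ) + (ε : ℂ) * Complex.I) d)
      (nhdsWithin 0 (Ioi 0))
      (nhds (Complex.I * Complex.exp ((Real.pi : ℂ)/4 * Complex.I) *
        Complex.cosh ((d : ℂ) * Complex.exp ((Real.pi : ℂ)/4 * Complex.I) *
          (Real.sqrt lam : ℂ)) / (Real.sqrt lam : ℂ))) := by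
  have hjump := tendsto_K1_sub_K1_of_re_neg_of_im_zero (z := -(lam : ℂ)) d
    (by simpa using hlam) (by simp)
  rwa [csqrt_neg_ofReal hlam.le, transferOfRoot_neg_sub_transferOfRoot_I_mul] at hjump

/-- for `λ > 0`, `d ≥ 0`, the jump of `K₁` across the branch cut is
`lim_{ε→0⁺} [K₁(-λ-iε,d) - K₁(-λ+iε,d)] = i e^{iπ/4} cosh(d e^{iπ/4} √λ)/√λ`. -/
theorem stmt7 (lam d : ℝ) (hlam : 0 < lam) (hd : 0 ≤ d) :
    Tendsto (fun ε : ℝ =>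
        K1 (-(lam : ℂ) - (ε : ℂ) * Complex.I) d - K1 (-(lam : ℂ) + (ε : ℂ) * Complex.I) d)
      (nhdsWithin 0 (Ioi 0))
      (nhds (Complex.I * Complex.exp ((Real.pi : ℂ)/4 * Complex.I) *
        Complex.cosh ((d : ℂ) * Complex.exp ((Real.pi : ℂ)/4 * Complex.I) *
          (Real.sqrt lam : ℂ)) / (Real.sqrt lam : ℂ))) :=
  stmt7_general lam d hlam
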